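/- arXiv:1208.2031 — 2 statements merged into one kernel-verified Lean document; each statement's English description precedes it below -/
import Mathlib

section
/- Let A be an associative unital algebra over ℝ, let D and T be elements of A, let n be a natural number with n ≥ 2, and let s be a real number. Then (D + s•T)² − (1/n)•(D + 3s•T)² = ((n−1)/n)•(D + (s(n−3)/(n−1))•T)² + (4s²/(1−n))•T², and moreover D + (s(n−3)/(n−1))•T = (D + 3s•T) − (2sn/(n−1))•T, so the same difference also equals ((n−1)/n)•((D + 3s•T) − (2sn/(n−1))•T)² + (4s²/(1−n))•T². -/
/-- The fundamental algebraic calculation (Lemma 3.2): for elements `D`, `T` of an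
associative unital `ℝ`-algebra `A`, a natural number `n ≥ 2` and a real `s`, the
difference `(D + s•T)² − (1/n)•(D + 3s•T)²` can be rewritten as
`((n−1)/n)•(D + (s(n−3)/(n−1))•T)² + (4s²/(1−n))•T²`; moreover
`D + (s(n−3)/(n−1))•T = (D + 3s•T) − (2sn/(n−1))•T`, so the difference also equals
`((n−1)/n)•((D + 3s•T) − (2sn/(n−1))•T)² + (4s²/(1−n))•T²`. -/
theorem fundamental_calculation {A : Type*} [Ring A] [Algebra ℝ A]
    (D T : A) (n : ℕ) (hn : 2 ≤ n) (s : ℝ) :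
    ((D + s • T) ^ 2 - ((1 : ℝ) / (n : ℝ)) • (D + (3 * s) • T) ^ 2
        = (((n : ℝ) - 1) / (n : ℝ)) • (D + (s * ((n : ℝ) - 3) / ((n : ℝ) - 1)) • T) ^ 2
          + (4 * s ^ 2 / (1 - (n : ℝ))) • T ^ 2)
    ∧ (D + (s * ((n : ℝ) - 3) / ((n : ℝ) - 1)) • T
        = (D + (3 * s) • T) - (2 * s * (n : ℝ) / ((n : ℝ) - 1)) • T)
    ∧ ((D + s • T) ^ 2 - ((1 : ℝ) / (n : ℝ)) • (D + (3 * s) • T) ^ 2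
        = (((n : ℝ) - 1) / (n : ℝ))
            • ((D + (3 * s) • T) - (2 * s * (n : ℝ) / ((n : ℝ) - 1)) • T) ^ 2
          + (4 * s ^ 2 / (1 - (n : ℝ))) • T ^ 2) := by
  have h2 : (2 : ℝ) ≤ (n : ℝ) := by exact_mod_cast hn
  have h0 : (n : ℝ) ≠ 0 := by linarith
  have h1 : (n : ℝ) - 1 ≠ 0 := by linarith
  have key : ∀ a : ℝ, (D + a • T) ^ 2 = D ^ 2 + a • (D * T + T * D) + (a ^ 2) • T ^ 2 := by
    intro a
    simp only [pow_two, add_mul, mul_add, smul_mul_assoc, mul_smul_comm, smul_smul, smul_add]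
    abel
  have e2 : D + (s * ((n : ℝ) - 3) / ((n : ℝ) - 1)) • T
        = (D + (3 * s) • T) - (2 * s * (n : ℝ) / ((n : ℝ) - 1)) • T := by
    rw [add_sub_assoc, ← sub_smul]
    congr 2
    field_simp
    ring
  have e1 : (D + s • T) ^ 2 - ((1 : ℝ) / (n : ℝ)) • (D + (3 * s) • T) ^ 2
        = (((n : ℝ) - 1) / (n : ℝ)) • (D + (s * ((n : ℝ) - 3) / ((n : ℝ) - 1)) • T) ^ 2
          + (4 * s ^ 2 / (1 - (n : ℝ))) • T ^ 2 := by
    rw [key, key, key]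
    have h4 : 4 * s ^ 2 / (1 - (n : ℝ)) = - (4 * s ^ 2 / ((n : ℝ) - 1)) := by
      rw [← neg_sub (n : ℝ) 1, div_neg]
    rw [h4]
    match_scalars <;> field_simp <;> ring
  exact ⟨e1, e2, by rw [← e2]; exact e1⟩
end

section
/- Let T ∈ Λ³V be a 3-form and set σ_T := (1/2)·Σᵢ (eᵢ⨼T)∧(eᵢ⨼T) ∈ Λ⁴V. Then in Cl(V) one has Σᵢ (eᵢ⨼T)·(eᵢ⨼T) = 2·σ_T − 3·‖T‖²·1, where the products on the left are Clifford products of the elements of Cl(V) corresponding to the 2-forms eᵢ⨼T, σ_T is regarded as an element of Cl(V) under the canonical identification, and ‖T‖² is the squared norm of T induced by ⟨·,·⟩ (for which the forms e_i∧e_j∧e_k, i<j<k, are orthonormal). -/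
noncomputable section

/-- The quadratic form `Q(v) = −⟨v,v⟩ = −‖v‖²` on `V = ℝⁿ`, so that in `Cl(V)` one has
`v·v = −‖v‖²` and `v·w + w·v = −2⟨v,w⟩`. -/
def negQ (n : ℕ) : QuadraticForm ℝ (Fin n → ℝ) :=
  QuadraticMap.weightedSumSquares ℝ (fun _ : Fin n => (-1 : ℝ))

/-- The orthonormal basis vector `eᵢ` viewed inside the Clifford algebra `Cl(V)`. -/
def eCl (n : ℕ) (i : Fin n) : CliffordAlgebra (negQ n) :=
  CliffordAlgebra.ι (negQ n) (Pi.single i 1)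

/-- The orthonormal basis vector `eᵢ` viewed inside the exterior algebra `ΛV`. -/
def eExt (n : ℕ) (i : Fin n) : ExteriorAlgebra ℝ (Fin n → ℝ) :=
  ExteriorAlgebra.ι ℝ (Pi.single i 1)

/-- The dual functional `⟨eᵢ, ·⟩` of `eᵢ` with respect to the inner product, i.e. the
`i`-th coordinate functional. -/
def coordDual (n : ℕ) (i : Fin n) : Module.Dual ℝ (Fin n → ℝ) := LinearMap.proj i

/-- Interior contraction `eᵢ⨼ ·` on the exterior algebra `ΛV` (the exterior algebra is
the Clifford algebra of the zero form, and `contractLeft` is contraction). -/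
def contr (n : ℕ) (i : Fin n) :
    ExteriorAlgebra ℝ (Fin n → ℝ) →ₗ[ℝ] ExteriorAlgebra ℝ (Fin n → ℝ) :=
  CliffordAlgebra.contractLeft (Q := (0 : QuadraticForm ℝ (Fin n → ℝ))) (coordDual n i)

/-- The canonical linear identification `ΛV ≅ Cl(V)` sending
`e_{i₁} ∧ ⋯ ∧ e_{i_k}` (for `i₁ < ⋯ < i_k`) to the Clifford product
`e_{i₁} ⋯ e_{i_k}`. -/
def phi (n : ℕ) : ExteriorAlgebra ℝ (Fin n → ℝ) ≃ₗ[ℝ] CliffordAlgebra (negQ n) :=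
  (CliffordAlgebra.equivExterior (negQ n)).symm


/-- The 4-form `σ_T := (1/2)·Σᵢ (eᵢ⨼T) ∧ (eᵢ⨼T) ∈ Λ⁴V` associated to a 3-form `T`
(products taken in the exterior algebra, i.e. wedge products). -/
def sigmaT (n : ℕ) (T : ExteriorAlgebra ℝ (Fin n → ℝ)) : ExteriorAlgebra ℝ (Fin n → ℝ) :=
  ((1 : ℝ) / 2) • ∑ i, contr n i T * contr n i T

open CliffordAlgebra in
theorem iota_mul_phi (n : ℕ) (j : Fin n) (x : ExteriorAlgebra ℝ (Fin n → ℝ)) :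
    eCl n j * phi n x = phi n (eExt n j * x - contr n j x) := by
  have hB : (QuadraticMap.associated (R := ℝ) (-(negQ n))) (Pi.single j 1) = coordDual n j := by
    refine LinearMap.ext fun w => ?_
    have h1 : ∀ u v : Fin n → ℝ, ∑ i, (u i + v i) * (u i + v i) =
        ∑ i, u i * u i + 2 * ∑ i, u i * v i + ∑ i, v i * v i := by
      intro u v
      rw [Finset.mul_sum, ← Finset.sum_add_distrib, ← Finset.sum_add_distrib]
      exact Finset.sum_congr rfl fun i _ => by ring
    have h2 := h1 (Pi.single j 1) w
    have h3 : ∑ i, (Pi.single j 1 : Fin n → ℝ) i * w i = w j := by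
      simp [Pi.single_apply]
    rw [h3] at h2
    simp only [QuadraticMap.associated_apply, neg_apply, negQ, coordDual,
      QuadraticMap.weightedSumSquares_apply, Pi.add_apply, neg_smul, one_smul,
      Finset.sum_neg_distrib, LinearMap.proj_apply, h2]
    simp
    ring
  have e : ∀ y, phi n y = changeForm (changeForm.neg_proof changeForm.associated_neg_proof) y :=
    fun y => rfl
  rw [map_sub, e (eExt n j * x)]
  have h4 := changeForm_ι_mul (changeForm.neg_proof (changeForm.associated_neg_proof (Q := negQ n)))
    (Pi.single j 1) x
  rw [LinearMap.neg_apply, hB, LinearMap.map_neg (contractLeft (Q := negQ n)), LinearMap.neg_apply, ← changeForm_contractLeft] at h4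
  refine eq_sub_of_add_eq ?_
  rw [sub_neg_eq_add] at h4
  exact h4.symm

theorem eExt_anti (n : ℕ) (j k : Fin n) : eExt n j * eExt n k = - (eExt n k * eExt n j) :=
  eq_neg_of_add_eq_zero_left (ExteriorAlgebra.ι_add_mul_swap _ _)

theorem contr_mul (n : ℕ) (j k : Fin n) (x : ExteriorAlgebra ℝ (Fin n → ℝ)) :
    contr n j (eExt n k * x) = (if j = k then (1:ℝ) else 0) • x - eExt n k * contr n j x := by
  refine (CliffordAlgebra.contractLeft_ι_mul _ _ _).trans ?_
  simp [coordDual, Pi.single_apply]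
  rfl

theorem contr_one (n : ℕ) (j : Fin n) : contr n j 1 = 0 :=
  CliffordAlgebra.contractLeft_one _ _

theorem contr_e (n : ℕ) (j k : Fin n) :
    contr n j (eExt n k) = (if j = k then (1:ℝ) else 0) • 1 := by
  have := contr_mul n j k 1
  simpa [contr_one] using this

theorem phi_one (n : ℕ) : phi n 1 = 1 :=
  CliffordAlgebra.changeForm_one
    (CliffordAlgebra.changeForm.neg_proof CliffordAlgebra.changeForm.associated_neg_proof)

theorem sum_sym_zero (n : ℕ) (s : Fin n → Fin n → ℝ) (hs : ∀ j k, s j k = s k j) :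
    ∑ j, ∑ k, s j k • (eExt n j * eExt n k) = 0 := by
  have h : ∑ j, ∑ k, s j k • (eExt n j * eExt n k)
      = - ∑ j, ∑ k, s j k • (eExt n j * eExt n k) := by
    conv_lhs => rw [Finset.sum_comm]
    rw [← Finset.sum_neg_distrib]
    refine Finset.sum_congr rfl fun j _ => ?_
    rw [← Finset.sum_neg_distrib]
    refine Finset.sum_congr rfl fun k _ => ?_
    rw [hs k j, eExt_anti n k j, smul_neg]
  have h2 : (2 : ℝ) • ∑ j, ∑ k, s j k • (eExt n j * eExt n k) = 0 := by
    rw [two_smul]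
    nth_rewrite 1 [h]
    exact neg_add_cancel _
  exact (smul_eq_zero.mp h2).resolve_left two_ne_zero

theorem sq_two_form (n : ℕ) (w : Fin n → Fin n → ℝ) (hw : ∀ j k, w j k = - w k j)
    (ω : ExteriorAlgebra ℝ (Fin n → ℝ))
    (hω : ω = ∑ j, ∑ k, w j k • (eExt n j * eExt n k)) :
    phi n ω * phi n ω = phi n (ω * ω) - (2 * ∑ j, ∑ k, w j k ^ 2) • 1 := by
  have hd : ∀ j, w j j = 0 := fun j => by linarith [hw j j]
  have hδ : ∀ j k, w j k * (if j = k then (1:ℝ) else 0) = 0 := by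
    intro j k
    split_ifs with h
    · subst h; simp [hd]
    · simp
  have hc : ∀ i, contr n i ω = ∑ m, (2 * w i m) • eExt n m := by
    intro i
    have h1 : contr n i ω = ∑ m, w i m • eExt n m - ∑ m, w m i • eExt n m := by
      rw [hω]
      simp only [map_sum, map_smul, contr_mul, contr_e, smul_sub, Finset.sum_sub_distrib,
        ite_smul, smul_ite, one_smul, zero_smul, smul_zero, mul_ite, mul_one, mul_zero]
      congr 1
      · rw [Finset.sum_comm]; simp
      · simp
    rw [h1, ← Finset.sum_sub_distrib]
    refine Finset.sum_congr rfl fun m _ => ?_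
    rw [hw m i, ← sub_smul]
    congr 1; ring
  have hcc : ∀ j k, contr n j (contr n k ω) = (2 * w k j) • 1 := by
    intro j k
    rw [hc]
    simp [contr_e, ite_smul]
  have hp : phi n ω = ∑ j, ∑ k, w j k • (eCl n j * eCl n k) := by
    rw [hω]
    simp only [map_sum, map_smul]
    refine Finset.sum_congr rfl fun j _ => Finset.sum_congr rfl fun k _ => ?_
    have h1 : eCl n k = phi n (eExt n k) := by
      have := iota_mul_phi n k 1
      simpa [phi_one, contr_one] using this
    rw [h1, iota_mul_phi, contr_e, map_sub, smul_sub, map_smul, smul_smul, hδ, zero_smul, sub_zero]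
  have key : phi n ω * phi n ω = phi n (∑ j, ∑ k, w j k •
      (eExt n j * (eExt n k * ω - contr n k ω) - contr n j (eExt n k * ω - contr n k ω))) := by
    conv_lhs => rw [hp, ← hp]
    conv_lhs => enter [1]; rw [hp]
    simp only [Finset.sum_mul, map_sum, map_smul, smul_mul_assoc, mul_assoc, iota_mul_phi]
  have hs0 : ∑ j, ∑ k, w j k • (eExt n j * contr n k ω) = 0 := by
    have : ∑ j, ∑ k, w j k • (eExt n j * contr n k ω)
        = ∑ j, ∑ m, (∑ k, w j k * (2 * w k m)) • (eExt n j * eExt n m) := by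
      refine Finset.sum_congr rfl fun j _ => ?_
      simp only [hc, Finset.mul_sum, Finset.smul_sum, mul_smul_comm, smul_smul, Finset.sum_smul]
      rw [Finset.sum_comm]
    rw [this]
    apply sum_sym_zero
    intro j k
    refine Finset.sum_congr rfl fun m _ => ?_
    rw [hw j m, hw m k]; ring
  have hs1 : ∑ j, ∑ k, w j k • (eExt n k * contr n j ω) = 0 := by
    rw [Finset.sum_comm, ← neg_eq_zero, ← hs0, ← Finset.sum_neg_distrib]
    refine Finset.sum_congr rfl fun j _ => ?_
    rw [← Finset.sum_neg_distrib]
    refine Finset.sum_congr rfl fun k _ => ?_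
    rw [hw k j, neg_smul, neg_neg]
  have hsum : ∑ j, ∑ k, w j k •
      (eExt n j * (eExt n k * ω - contr n k ω) - contr n j (eExt n k * ω - contr n k ω))
      = ω * ω - (2 * ∑ j, ∑ k, w j k ^ 2) • 1 := by
    have h1 : ∀ j k, w j k •
      (eExt n j * (eExt n k * ω - contr n k ω) - contr n j (eExt n k * ω - contr n k ω))
      = (w j k • (eExt n j * eExt n k)) * ω - w j k • (eExt n j * contr n k ω)
        + w j k • (eExt n k * contr n j ω) - (2 * w j k ^ 2) • 1 := by
      intro j k
      rw [map_sub, contr_mul, hcc, mul_sub, hw k j]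
      simp only [smul_sub, smul_smul, hδ, zero_smul, smul_mul_assoc, mul_assoc]
      have : w j k * (2 * -w j k) = - (2 * w j k ^ 2) := by ring
      rw [this, neg_smul]
      abel
    simp only [h1, Finset.sum_sub_distrib, Finset.sum_add_distrib, hs0, hs1]
    simp only [← Finset.sum_mul, ← Finset.sum_smul, ← Finset.mul_sum, ← hω]
    simp
  rw [key, hsum, map_sub, map_smul, phi_one]

theorem sum_rot {n : ℕ} {M : Type*} [AddCommMonoid M] (f : Fin n → Fin n → Fin n → M) :
    ∑ i, ∑ j, ∑ k, f j k i = ∑ i, ∑ j, ∑ k, f i j k := by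
  rw [Finset.sum_comm]
  exact Finset.sum_congr rfl fun _ _ => Finset.sum_comm

theorem sum_swap {n : ℕ} {M : Type*} [AddCommMonoid M] (f : Fin n → Fin n → Fin n → M) :
    ∑ i, ∑ j, ∑ k, f j i k = ∑ i, ∑ j, ∑ k, f i j k := Finset.sum_comm

theorem contr_three (n : ℕ) (c : Fin n → Fin n → Fin n → ℝ) (i : Fin n) :
    contr n i (∑ i, ∑ j, ∑ k, c i j k • (eExt n i * eExt n j * eExt n k))
     = ∑ j, ∑ k, (c i j k - c j i k + c j k i) • (eExt n j * eExt n k) := by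
  simp only [map_sum, map_smul, mul_assoc, contr_mul, contr_e, mul_sub, smul_sub, add_smul,
    sub_smul, Finset.sum_sub_distrib, Finset.sum_add_distrib,
        ite_smul, smul_ite, one_smul, zero_smul, smul_zero, mul_ite, mul_one, mul_zero]
  have h1 : ∑ x, ∑ y, ∑ z, (if i = x then c x y z • (eExt n y * eExt n z) else 0)
      = ∑ j, ∑ k, c i j k • (eExt n j * eExt n k) := by
    rw [← sum_rot, ← sum_rot]; simp
    try rw [Finset.sum_comm]
  have h2 : ∑ x, ∑ y, ∑ z, (if i = y then c x y z • (eExt n x * eExt n z) else 0)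
      = ∑ j, ∑ k, c j i k • (eExt n j * eExt n k) := by
    refine Finset.sum_congr rfl fun j _ => ?_
    rw [Finset.sum_comm]; simp
  rw [h1, h2]
  simp
  abel

theorem sum_contraction_squares (n : ℕ) (a : Fin n → Fin n → Fin n → ℝ)
    (T : ExteriorAlgebra ℝ (Fin n → ℝ))
    (hT : T = ∑ i, ∑ j, ∑ k, if i < j ∧ j < k
        then a i j k • (eExt n i * eExt n j * eExt n k) else 0)
    (normSqT : ℝ)
    (hnorm : normSqT = ∑ i, ∑ j, ∑ k, if i < j ∧ j < k then (a i j k) ^ 2 else 0) :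
    ∑ i, phi n (contr n i T) * phi n (contr n i T)
      = (2 : ℝ) • phi n (sigmaT n T) - (3 * normSqT) • (1 : CliffordAlgebra (negQ n)) := by
  obtain ⟨c, hc⟩ : ∃ c : Fin n → Fin n → Fin n → ℝ,
      ∀ i j k, c i j k = if i < j ∧ j < k then a i j k else 0 := ⟨_, fun _ _ _ => rfl⟩
  have hT' : T = ∑ i, ∑ j, ∑ k, c i j k • (eExt n i * eExt n j * eExt n k) := by
    simp only [hT, hc, ite_smul, zero_smul]
  have hN : normSqT = ∑ i, ∑ j, ∑ k, c i j k ^ 2 := by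
    rw [hnorm]
    refine Finset.sum_congr rfl fun i _ => Finset.sum_congr rfl fun j _ =>
      Finset.sum_congr rfl fun k _ => ?_
    rw [hc]; split_ifs <;> simp
  let w : Fin n → Fin n → Fin n → ℝ := fun i j k =>
    (1 / 2) * ((c i j k - c j i k + c j k i) - (c i k j - c k i j + c k j i))
  have hw : ∀ i, contr n i T = ∑ j, ∑ k, w i j k • (eExt n j * eExt n k) := by
    intro i
    rw [hT', contr_three, ← sub_eq_zero, ← Finset.sum_sub_distrib]
    simp only [← Finset.sum_sub_distrib, ← sub_smul]
    apply sum_sym_zero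
    intro j k
    simp only [w]; ring
  have hsq : ∀ i j k, w i j k ^ 2 = (1 / 4) * (c i j k ^ 2 + c j i k ^ 2 + c j k i ^ 2
      + c i k j ^ 2 + c k i j ^ 2 + c k j i ^ 2) := by
    intro i j k
    simp only [w, hc]
    split_ifs <;> first | omega | ring
  have hsum : ∑ i, 2 * ∑ j, ∑ k, w i j k ^ 2 = 3 * normSqT := by
    rw [hN, ← Finset.mul_sum]
    simp only [hsq, ← Finset.mul_sum, Finset.sum_add_distrib]
    have e1 := sum_swap (fun i j k => c i j k ^ 2)
    have e2 := sum_rot (fun i j k => c i j k ^ 2)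
    have e3 := sum_rot (fun i j k => c j k i ^ 2)
    have e4 := sum_swap (fun i j k => c k i j ^ 2)
    have e5 := sum_swap (fun i j k => c j k i ^ 2)
    linarith
  have hfin : ∀ i, phi n (contr n i T) * phi n (contr n i T) =
      phi n (contr n i T * contr n i T) - (2 * ∑ j, ∑ k, w i j k ^ 2) • 1 := fun i =>
    sq_two_form n (w i) (fun j k => by simp only [w]; ring) _ (hw i)
  simp only [hfin, Finset.sum_sub_distrib, ← Finset.sum_smul, hsum]
  rw [sigmaT, map_smul, smul_smul, map_sum]
  norm_num
end
end
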